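/- For any finite simple graphs G of order n ≥ 2 and H of order n' ≥ 2, the super domination number of the Cartesian product satisfies γ_sp(G □ H) ≤ min{n'·γ_sp(G), n·γ_sp(H)}. -/

import Mathlib

/-!
If `D` is super dominating in `G`, then `D ×ˢ univ` is super dominating in `G □ H`: a vertex
`(g, h)` outside it has `(d, h)` as its private neighbour, where `d ∈ D` is the private neighbour
of `g` in `G`. Indeed the `H`-direction neighbours of `(d, h)` stay in `D ×ˢ univ`, and the
`G`-direction ones that leave it are governed by `G.neighborSet d ∩ Dᶜ = {g}`. Taking `D` of
minimum cardinality gives `superDomNum (G □ H) ≤ |W| * superDomNum G`. The other bound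
follows by applying this to `H □ G ≃g G □ H`.
-/

open SimpleGraph

/-- `D` is a super dominating set of `G`: every vertex outside `D` has a private
neighbour in `D` with respect to the complement of `D`. -/
def IsSuperDominatingSet {V : Type*} (G : SimpleGraph V) (D : Set V) : Prop :=
  ∀ u ∈ Dᶜ, ∃ v ∈ D, G.neighborSet v ∩ Dᶜ = {u}

/-- The super domination number of `G`. -/
noncomputable def superDomNum {V : Type*} (G : SimpleGraph V) : ℕ :=
  sInf {k | ∃ D : Set V, IsSuperDominatingSet G D ∧ D.ncard = k}

theorem IsSuperDominatingSet.superDomNum_le {V : Type*} {G : SimpleGraph V} {D : Set V}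
    (hD : IsSuperDominatingSet G D) : superDomNum G ≤ D.ncard :=
  Nat.sInf_le ⟨D, hD, rfl⟩

/-- The infimum defining `superDomNum` is attained: the whole vertex set is always super
dominating, so it is not an infimum over the empty set. -/
theorem exists_isSuperDominatingSet_ncard_eq {V : Type*} (G : SimpleGraph V) :
    ∃ D : Set V, IsSuperDominatingSet G D ∧ D.ncard = superDomNum G :=
  Nat.sInf_mem (s := {k | ∃ D : Set V, IsSuperDominatingSet G D ∧ D.ncard = k})
    ⟨_, Set.univ, fun u hu => absurd (Set.mem_univ u) hu, rfl⟩

theorem IsSuperDominatingSet.prod_univ {V W : Type*} {G : SimpleGraph V} (H : SimpleGraph W)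
    {D : Set V} (hD : IsSuperDominatingSet G D) :
    IsSuperDominatingSet (G □ H) (D ×ˢ (Set.univ : Set W)) := by
  rintro ⟨g, h⟩ hu
  have hg : g ∈ Dᶜ := fun hg => hu ⟨hg, Set.mem_univ _⟩
  obtain ⟨d, hd, hN⟩ := hD g hg
  have key : ∀ x, (G.Adj d x ∧ x ∉ D) ↔ x = g := fun x => by
    simpa using Set.ext_iff.1 hN x
  refine ⟨(d, h), ⟨hd, Set.mem_univ _⟩, ?_⟩
  ext ⟨x, y⟩
  have := key x
  simp only [Set.mem_inter_iff, mem_neighborSet, boxProd_adj, Set.mem_compl_iff, Set.mem_prod,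
    Set.mem_univ, and_true, Set.mem_singleton_iff, Prod.mk.injEq]
  grind

theorem superDomNum_boxProd_le_left {V W : Type*} [Fintype W]
    (G : SimpleGraph V) (H : SimpleGraph W) :
    superDomNum (G □ H) ≤ Fintype.card W * superDomNum G := by
  obtain ⟨D, hD, hc⟩ := exists_isSuperDominatingSet_ncard_eq G
  refine (hD.prod_univ H).superDomNum_le.trans_eq ?_
  rw [Set.ncard_prod, Set.ncard_univ, Nat.card_eq_fintype_card, hc, mul_comm]

theorem superDomNum_le_of_iso {V W : Type*} {G : SimpleGraph V} {H : SimpleGraph W}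
    (e : G ≃g H) : superDomNum H ≤ superDomNum G := by
  obtain ⟨D, hD, hc⟩ := exists_isSuperDominatingSet_ncard_eq G
  have hS : IsSuperDominatingSet H (e '' D) := by
    intro u hu
    obtain ⟨a, rfl⟩ := e.surjective u
    obtain ⟨d, hd, hN⟩ := hD a fun ha => hu ⟨a, ha, rfl⟩
    refine ⟨e d, ⟨d, hd, rfl⟩, ?_⟩
    ext x
    obtain ⟨b, rfl⟩ := e.surjective x
    simpa [e.injective.mem_set_image, e.map_adj_iff] using Set.ext_iff.1 hN b
  refine hS.superDomNum_le.trans_eq ?_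
  rw [Set.ncard_image_of_injective _ e.injective, hc]

theorem superDomNum_boxProd_le_min {V W : Type*} [Fintype V] [Fintype W]
    (G : SimpleGraph V) (H : SimpleGraph W)
    (hn : 2 ≤ Fintype.card V) (hn' : 2 ≤ Fintype.card W) :
    superDomNum (G □ H) ≤
      min (Fintype.card W * superDomNum G) (Fintype.card V * superDomNum H) :=
  le_min (superDomNum_boxProd_le_left G H)
    ((superDomNum_le_of_iso (boxProdComm H G)).trans (superDomNum_boxProd_le_left H G))
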